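/- arXiv:1604.00447 — 2 statements merged into one kernel-verified Lean document; each statement's English description precedes it below -/
import Mathlib

section
/- Let G be a simple graph on vertex set [n] with maximum degree d, and let 2 ≤ k ≤ n. Then there exists a constant C_k > 0 depending only on k such that the number of permutations π of [n] with the property that every vertex of V_π = {π(1),...,π(k)} has at least one neighbor (in G) belonging to V_π is at most C_k n^{⌊k/2⌋} d^{⌊(k+1)/2⌋} (n−k)!. -/
/-!
If every vertex of `V_π` has a neighbour in `V_π`, the graph induced on the `k` positions has no
isolated vertex, so by Ore's theorem (`exists_small_dominating`) it has a dominating set `D` with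
`2 |D| ≤ k`. Each position outside `D` picks a neighbouring position in `D`; there are at most
`2 ^ k * k ^ k` choices of `D` and of this assignment. Once they are fixed, the first `k` values of
`π` are chosen by placing `D` freely and every other position next to its assigned one, in at most
`n ^ |D| * d ^ (k - |D|)` ways (`card_dominated_le`), which is at most
`n ^ ⌊k/2⌋ * d ^ ⌊(k+1)/2⌋` because `d ≤ n`. Each choice of the first `k` values extends to at most
`(n - k)!` permutations (`card_perm_fiber_le`).
-/

open Finset

noncomputable section

namespace Paper

/-- The set `{1,...,k}` inside `Fin n` (indices with value `< k`). -/
def firstK (n k : ℕ) : Finset (Fin n) := Finset.univ.filter fun i => (i : ℕ) < k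

/-- **Ore's theorem**: the complement of a minimal dominating set of a graph without isolated
vertices is again dominating, and the smaller of the two has at most half of the vertices. -/
theorem exists_small_dominating {α : Type*} [Fintype α] [DecidableEq α] (H : SimpleGraph α)
    (hH : ∀ i, ∃ j, H.Adj i j) :
    ∃ D : Finset α, 2 * D.card ≤ Fintype.card α ∧ ∀ i, i ∉ D → ∃ j ∈ D, H.Adj j i := by
  classical
  let P : Finset α → Prop := fun D => ∀ i, i ∉ D → ∃ j ∈ D, H.Adj j i
  obtain ⟨D, hD⟩ : ∃ D, Minimal P D :=
    Set.Finite.exists_minimal (Set.toFinite {D | P D}) ⟨Finset.univ, fun i hi => by simp at hi⟩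
  have hDc : P Dᶜ := by
    intro i hi
    have hi : i ∈ D := by simpa using hi
    have hnot : ¬ P (D.erase i) := fun h =>
      Finset.notMem_erase i D (hD.2 h (Finset.erase_subset i D) hi)
    simp only [P, not_forall, not_exists, not_and] at hnot
    obtain ⟨v, hv, hv'⟩ := hnot
    by_cases hvi : v = i
    · subst hvi
      obtain ⟨j, hj⟩ := hH v
      refine ⟨j, ?_, hj.symm⟩
      rw [Finset.mem_compl]
      exact fun hjD => hv' j (Finset.mem_erase.2 ⟨hj.ne', hjD⟩) hj.symm
    · have hvD : v ∉ D := fun h => hv (Finset.mem_erase.2 ⟨hvi, h⟩)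
      obtain ⟨j, hjD, hj⟩ := hD.1 v hvD
      have hji : j = i := by
        by_contra hne
        exact hv' j (Finset.mem_erase.2 ⟨hne, hjD⟩) hj
      subst hji
      exact ⟨v, Finset.mem_compl.2 hvD, hj.symm⟩
  have hcard := Finset.card_add_card_compl D
  by_cases h : 2 * D.card ≤ Fintype.card α
  · exact ⟨D, h, hD.1⟩
  · exact ⟨Dᶜ, by omega, hDc⟩

theorem card_dominated_le {α V : Type*} [Fintype α] [DecidableEq α] [Fintype V] [DecidableEq V]
    (G : SimpleGraph V) [DecidableRel G.Adj] (D : Finset α) (h : α → α)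
    (hh : ∀ i, i ∉ D → h i ∈ D) :
    (Finset.univ.filter fun f : α → V => ∀ i, i ∉ D → G.Adj (f (h i)) (f i)).card ≤
      G.maxDegree ^ (Fintype.card α - D.card) * Fintype.card V ^ D.card := by
  classical
  have key := Finset.card_le_mul_card_image_of_maps_to
    (s := Finset.univ.filter fun f : α → V => ∀ i, i ∉ D → G.Adj (f (h i)) (f i))
    (t := (Finset.univ : Finset (D → V))) (f := fun f (i : D) => f i.1)
    (fun _ _ => Finset.mem_univ _) (G.maxDegree ^ (Fintype.card α - D.card)) ?_
  · simpa using key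
  intro u _
  -- With the values `u` on `D` fixed, every other value lies in a prescribed neighbourhood.
  let T : α → Finset V := fun i =>
    if hi : i ∈ D then {u ⟨i, hi⟩} else G.neighborFinset (u ⟨h i, hh i hi⟩)
  calc _ ≤ (Fintype.piFinset T).card := by
        apply Finset.card_le_card
        intro f hf
        simp only [Finset.mem_filter, Finset.mem_univ, true_and] at hf
        obtain ⟨hf, rfl⟩ := hf
        rw [Fintype.mem_piFinset]
        intro i
        by_cases hi : i ∈ D
        · simp [T, hi]
        · simpa [T, hi] using hf i hi
    _ = ∏ i, (T i).card := Fintype.card_piFinset _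
    _ ≤ ∏ i, (if i ∈ D then 1 else G.maxDegree) := by
        apply Finset.prod_le_prod'
        intro i _
        by_cases hi : i ∈ D
        · simp [T, hi]
        · simpa [T, hi] using G.degree_le_maxDegree _
    _ = _ := by
        rw [Finset.prod_ite]
        simp [Finset.filter_not, Finset.card_sdiff]

theorem card_perm_fiber_le {n k : ℕ} (hkn : k ≤ n) (u : Fin k → Fin n) :
    (Finset.univ.filter fun π : Equiv.Perm (Fin n) =>
      (fun i : Fin k => π (Fin.castLE hkn i)) = u).card ≤ (n - k).factorial := by
  classical
  rcases Finset.eq_empty_or_nonempty (Finset.univ.filter fun π : Equiv.Perm (Fin n) =>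
      (fun i : Fin k => π (Fin.castLE hkn i)) = u) with he | ⟨σ, hσ⟩
  · simp [he]
  simp only [Finset.mem_filter, Finset.mem_univ, true_and] at hσ
  subst hσ
  let p : Fin n → Prop := fun a => ¬ (a : ℕ) < k
  have hp : Fintype.card (Subtype p) = n - k := by
    have h1 : Fintype.card {a : Fin n // (a : ℕ) < k} = k := by
      rw [← Fintype.card_fin k]
      refine Fintype.card_congr ⟨fun a => ⟨a.1, by simpa using a.2⟩,
        fun a => ⟨⟨a, by have := a.2; simp at this; omega⟩, by simp⟩,
        fun a => rfl, fun a => rfl⟩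
    have := Fintype.card_subtype_compl (fun a : Fin n => (a : ℕ) < k)
    rw [h1, Fintype.card_fin] at this
    exact this
  -- Composing with `σ⁻¹` turns the fibre into the permutations that fix the first `k` indices.
  have hc : Fintype.card {f : Equiv.Perm (Fin n) // ∀ a, ¬ p a → f a = a} = (n - k).factorial := by
    rw [← hp, ← Fintype.card_perm]
    exact (Fintype.card_congr (Equiv.Perm.subtypeEquivSubtypePerm p)).symm
  rw [← hc, Fintype.card_subtype]
  apply Finset.card_le_card_of_injOn (fun π => σ⁻¹ * π)
  · intro π hπ
    simp only [Finset.coe_filter, Finset.mem_univ, true_and, Set.mem_ofPred_eq] at hπ ⊢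
    intro a ha
    have hak : (a : ℕ) < k := not_not.1 ha
    have := congrFun hπ ⟨a, hak⟩
    have h2 : π a = σ a := this
    simp [h2]
  · intro a _ b _ hab
    exact mul_left_cancel hab

/-- counting step in the proof of Lemma 2.1: if `G` is a simple graph on `[n]`
with maximum degree `d` and `2 ≤ k ≤ n`, the number of permutations `π` of `[n]` such that every
vertex of `V_π = {π(1),...,π(k)}` has a neighbor in `V_π` is at most
`C_k n^{⌊k/2⌋} d^{⌊(k+1)/2⌋} (n-k)!`. -/
theorem statement7 (k : ℕ) (hk : 2 ≤ k) :
    ∃ C : ℝ, 0 < C ∧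
      ∀ (n : ℕ), k ≤ n → ∀ (G : SimpleGraph (Fin n)) (instAdj : DecidableRel G.Adj) (d : ℕ),
        G.maxDegree = d →
        (Set.ncard {π : Equiv.Perm (Fin n) |
            ∀ i ∈ (firstK n k).image π, ∃ j ∈ (firstK n k).image π, G.Adj i j} : ℝ) ≤
          C * (n : ℝ) ^ (k / 2 : ℕ) * (d : ℝ) ^ ((k + 1) / 2 : ℕ) * ((n - k).factorial : ℝ) := by
  classical
  refine ⟨(2 : ℝ) ^ k * (k : ℝ) ^ k, by positivity, ?_⟩
  intro n hkn G instAdj d hd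
  set S : Set (Equiv.Perm (Fin n)) := {π : Equiv.Perm (Fin n) |
    ∀ i ∈ (firstK n k).image π, ∃ j ∈ (firstK n k).image π, G.Adj i j} with hS
  let M : ℕ := n ^ (k / 2) * d ^ ((k + 1) / 2)
  have hdn : d ≤ n := by
    have : Nonempty (Fin n) := ⟨⟨0, by omega⟩⟩
    have := G.maxDegree_lt_card_verts
    rw [hd, Fintype.card_fin] at this
    omega
  -- The admissible pairs of a dominating set and an assignment of positions to it.
  let I : Finset (Finset (Fin k) × (Fin k → Fin k)) :=
    Finset.univ.filter fun x => 2 * x.1.card ≤ k ∧ ∀ i, i ∉ x.1 → x.2 i ∈ x.1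
  let F : Finset (Fin k) × (Fin k → Fin k) → Finset (Fin k → Fin n) := fun x =>
    Finset.univ.filter fun f => ∀ i, i ∉ x.1 → G.Adj (f (x.2 i)) (f i)
  have hF : ∀ x ∈ I, (F x).card ≤ M := by
    intro x hx
    obtain ⟨hx1, hx2⟩ := (Finset.mem_filter.1 hx).2
    have h := card_dominated_le G x.1 x.2 hx2
    rw [hd, Fintype.card_fin, Fintype.card_fin] at h
    refine le_trans (le_of_eq (by simp only [F]; congr)) (h.trans ?_)
    have e1 : k - x.1.card = (k / 2 - x.1.card) + (k + 1) / 2 := by omega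
    have e2 : k / 2 = (k / 2 - x.1.card) + x.1.card := by omega
    calc d ^ (k - x.1.card) * n ^ x.1.card
        = d ^ (k / 2 - x.1.card) * d ^ ((k + 1) / 2) * n ^ x.1.card := by rw [e1, pow_add]
      _ ≤ n ^ (k / 2 - x.1.card) * d ^ ((k + 1) / 2) * n ^ x.1.card := by gcongr
      _ = n ^ ((k / 2 - x.1.card) + x.1.card) * d ^ ((k + 1) / 2) := by rw [pow_add]; ring
      _ = M := by rw [← e2]
  have hI : I.card ≤ 2 ^ k * k ^ k := by
    refine (Finset.card_le_univ I).trans ?_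
    simp
  have hmaps : ∀ π ∈ S.toFinset, (fun i : Fin k => π (Fin.castLE hkn i)) ∈ I.biUnion F := by
    intro π hπ
    rw [Set.mem_toFinset, hS, Set.mem_ofPred_eq] at hπ
    have hiso : ∀ i, ∃ j, (G.comap fun i : Fin k => π (Fin.castLE hkn i)).Adj i j := by
      intro i
      obtain ⟨j, hj, hij⟩ := hπ (π (Fin.castLE hkn i))
        (Finset.mem_image_of_mem _ (by simp [firstK]))
      obtain ⟨a, ha, rfl⟩ := Finset.mem_image.1 hj
      have hak : (a : ℕ) < k := by simpa [firstK] using ha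
      exact ⟨⟨a, hak⟩, hij⟩
    obtain ⟨D, hD, hdom⟩ := exists_small_dominating _ hiso
    rw [Fintype.card_fin] at hD
    have hch : ∀ i, ∃ j, i ∉ D →
        j ∈ D ∧ G.Adj (π (Fin.castLE hkn j)) (π (Fin.castLE hkn i)) := by
      intro i
      by_cases hi : i ∈ D
      · exact ⟨i, fun h => absurd hi h⟩
      · obtain ⟨j, hj, hji⟩ := hdom i hi
        exact ⟨j, fun _ => ⟨hj, hji⟩⟩
    choose h hh using hch
    refine Finset.mem_biUnion.2 ⟨(D, h), ?_, ?_⟩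
    · exact Finset.mem_filter.2 ⟨Finset.mem_univ _, hD, fun i hi => (hh i hi).1⟩
    · exact Finset.mem_filter.2 ⟨Finset.mem_univ _, fun i hi => (hh i hi).2⟩
  have hcount : S.toFinset.card ≤ (n - k).factorial * (I.biUnion F).card := by
    refine Finset.card_le_mul_card_image_of_maps_to hmaps _ fun u _ => ?_
    refine le_trans (Finset.card_le_card ?_) (card_perm_fiber_le hkn u)
    exact Finset.filter_subset_filter _ (Finset.subset_univ _)
  have hU : (I.biUnion F).card ≤ 2 ^ k * k ^ k * M :=
    (Finset.card_biUnion_le_card_mul I F M hF).trans (Nat.mul_le_mul_right _ hI)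
  have hfin : S.ncard ≤ 2 ^ k * k ^ k * n ^ (k / 2) * d ^ ((k + 1) / 2) * (n - k).factorial := by
    rw [Set.ncard_eq_toFinset_card']
    refine (hcount.trans (Nat.mul_le_mul_left _ hU)).trans (le_of_eq ?_)
    simp only [M]
    ring
  exact_mod_cast hfin

end Paper
end
end

section
/- Basic permutation inequality: let k_1, k_2 ≥ 1, k = k_1 + k_2 ≤ n, let f: [n]^{k_1} → [0,∞) and g: [n]^{k_2} → [0,∞) be nonnegative functions, and let A_1, A_2 ⊂ [n] be disjoint subsets with |A_1| = k_1 and |A_2| = k_2. Then (1/n!) Σ over π ∈ Π_n of f(π(A_1)) g(π(A_2)) ≤ [(n−k)! · n! / ((n−k_1)! · (n−k_2)!)] · [(1/n!) Σ over π ∈ Π_n of f(π(A_1))] · [(1/n!) Σ over π ∈ Π_n of g(π(A_2))]; in particular the multiplying factor is bounded by a constant C_{k_1,k_2} depending only on k_1 and k_2, uniformly in n ≥ k. -/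
/-!
For an injective tuple `a` of `k` points of `[n]`, the tuple `π ∘ a` with `π` uniform is uniform on
the injective `k`-tuples, each of which is attained by `(n - k)!` permutations
(`sum_perm_comp`). Thus all three sums over permutations become sums over injective tuples.
An injective `(k₁ + k₂)`-tuple is determined by its two halves, which are themselves injective, so by
nonnegativity the joint sum is at most the product of the two separate sums
(`sum_embedding_sum_le`); the factorials are exactly the stated prefactor.

The prefactor equals `∏_{i < k₁} (n - i) / (n - k₂ - i)`, and each of its factors is at
most `k₂ + 1` because `n - k₂ - i ≥ 1`. Hence it is bounded by `(k₂ + 1) ^ k₁`.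
-/

open Finset

noncomputable section

namespace Paper

/-- The number of permutations carrying `a` to `x` does not depend on the injective tuple `x`:
translating by one such permutation identifies them with the pointwise stabilizer of `a`. -/
lemma card_fiber {ι : Type*} [Fintype ι] [DecidableEq ι] {n : ℕ} (a x : ι ↪ Fin n) :
    #{π : Equiv.Perm (Fin n) | a.trans π.toEmbedding = x} =
      #{π : Equiv.Perm (Fin n) | a.trans π.toEmbedding = a} := by
  classical
  obtain ⟨e, he⟩ := Equiv.Perm.exists_extending_pair a x a.injective x.injective
  refine Finset.card_bij' (fun π _ => e⁻¹ * π) (fun π _ => e * π) ?_ ?_ ?_ ?_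
  · intro π hπ
    simp only [mem_filter, mem_univ, true_and, DFunLike.ext_iff, Function.Embedding.trans_apply,
      Equiv.coe_toEmbedding, Equiv.Perm.mul_apply] at hπ ⊢
    intro i
    rw [hπ, ← he]
    simp
  · intro π hπ
    simp only [mem_filter, mem_univ, true_and, DFunLike.ext_iff, Function.Embedding.trans_apply,
      Equiv.coe_toEmbedding, Equiv.Perm.mul_apply] at hπ ⊢
    intro i
    rw [hπ, he]
  · intro π _
    simp
  · intro π _
    simp

lemma sum_perm_comp_aux {ι : Type*} [Fintype ι] [DecidableEq ι] {n : ℕ} (a : ι ↪ Fin n)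
    (F : (ι → Fin n) → ℝ) :
    ∑ π : Equiv.Perm (Fin n), F (π ∘ a) =
      #{π : Equiv.Perm (Fin n) | a.trans π.toEmbedding = a} * ∑ x : ι ↪ Fin n, F x := by
  classical
  rw [← Finset.sum_fiberwise (s := univ)
    (g := fun π : Equiv.Perm (Fin n) => a.trans π.toEmbedding), Finset.mul_sum]
  refine Finset.sum_congr rfl fun x _ => ?_
  rw [← card_fiber a x, ← nsmul_eq_mul]
  refine Finset.sum_eq_card_nsmul fun π hπ => ?_
  rw [← (mem_filter.mp hπ).2]
  rfl

/-- Each injective tuple indexed by `ι` is attained by `(n - |ι|)!` permutations. The value of the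
common fiber size is read off from the case `F = 1`. -/
lemma sum_perm_comp {ι : Type*} [Fintype ι] [DecidableEq ι] {n : ℕ} (a : ι ↪ Fin n)
    (F : (ι → Fin n) → ℝ) :
    ∑ π : Equiv.Perm (Fin n), F (π ∘ a) =
      ((n - Fintype.card ι).factorial : ℝ) * ∑ x : ι ↪ Fin n, F x := by
  have hle : Fintype.card ι ≤ n := by
    simpa using Fintype.card_le_of_embedding a
  have h1 := sum_perm_comp_aux a (fun _ => 1)
  simp only [sum_const, card_univ, nsmul_eq_mul, mul_one, Fintype.card_perm, Fintype.card_fin,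
    Fintype.card_embedding_eq] at h1
  have h2 : ((n - Fintype.card ι).factorial : ℝ) * (n.descFactorial (Fintype.card ι) : ℝ) =
      n.factorial := by
    exact_mod_cast Nat.factorial_mul_descFactorial hle
  have h3 : (n.descFactorial (Fintype.card ι) : ℝ) ≠ 0 := by
    exact_mod_cast (Nat.descFactorial_pos.mpr hle).ne'
  rw [sum_perm_comp_aux, mul_right_cancel₀ h3 (h1.symm.trans h2.symm)]

/-- Splitting an injective tuple into its two halves is injective, so the sum over the image of this
splitting is bounded by the sum over all pairs. -/
lemma sum_embedding_sum_le {ι κ : Type*} [Fintype ι] [DecidableEq ι] [Fintype κ] [DecidableEq κ]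
    {n : ℕ} (f : (ι → Fin n) → ℝ) (g : (κ → Fin n) → ℝ) (hf : ∀ x, 0 ≤ f x) (hg : ∀ x, 0 ≤ g x) :
    ∑ x : ι ⊕ κ ↪ Fin n, f (x ∘ Sum.inl) * g (x ∘ Sum.inr) ≤
      (∑ x : ι ↪ Fin n, f x) * ∑ x : κ ↪ Fin n, g x := by
  classical
  rw [Finset.sum_mul_sum, ← Finset.sum_product', univ_product_univ]
  let split : (ι ⊕ κ ↪ Fin n) → (ι ↪ Fin n) × (κ ↪ Fin n) := fun x =>
    (Function.Embedding.inl.trans x, Function.Embedding.inr.trans x)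
  have hinj : Function.Injective split := by
    intro x y h
    ext i
    rcases i with i | i
    · exact congrArg Fin.val (DFunLike.congr_fun (congrArg Prod.fst h) i)
    · exact congrArg Fin.val (DFunLike.congr_fun (congrArg Prod.snd h) i)
  calc ∑ x : ι ⊕ κ ↪ Fin n, f (x ∘ Sum.inl) * g (x ∘ Sum.inr)
      = ∑ p ∈ univ.map ⟨split, hinj⟩, f p.1 * g p.2 := by
        rw [Finset.sum_map]
        rfl
    _ ≤ _ := Finset.sum_le_sum_of_subset_of_nonneg (subset_univ _)
        fun p _ _ => mul_nonneg (hf _) (hg _)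

/-- The bound on the prefactor with denominators cleared and `m = n - (k₁ + k₂)`. -/
lemma factorial_bound (m k₂ k₁ : ℕ) :
    m.factorial * (m + k₂ + k₁).factorial ≤
      (k₂ + 1) ^ k₁ * ((m + k₂).factorial * (m + k₁).factorial) := by
  induction k₁ with
  | zero => simp [mul_comm]
  | succ k ih =>
    have h : m + k₂ + k + 1 ≤ (k₂ + 1) * (m + k + 1) := by nlinarith [Nat.zero_le (k₂ * (m + k))]
    rw [← add_assoc, ← add_assoc, Nat.factorial_succ, Nat.factorial_succ, pow_succ]
    calc m.factorial * ((m + k₂ + k + 1) * (m + k₂ + k).factorial)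
        = (m + k₂ + k + 1) * (m.factorial * (m + k₂ + k).factorial) := by ring
      _ ≤ ((k₂ + 1) * (m + k + 1)) *
          ((k₂ + 1) ^ k * ((m + k₂).factorial * (m + k).factorial)) := Nat.mul_le_mul h ih
      _ = _ := by ring

/-- Lemma 7.2, basic permutation inequality: for nonnegative `f`, `g` and
disjoint ordered index sets `A₁`, `A₂`,
`(1/n!) Σ_π f(π(A₁)) g(π(A₂)) ≤ [(n-k)! n! / ((n-k₁)!(n-k₂)!)] (1/n! Σ_π f(π(A₁))) (1/n! Σ_π g(π(A₂)))`,
and the multiplying factor is bounded by a constant depending only on `k₁, k₂`, uniformly in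
`n ≥ k₁ + k₂`. -/
theorem statement11 (k₁ k₂ : ℕ) (hk₁ : 1 ≤ k₁) (hk₂ : 1 ≤ k₂) :
    (∀ (n : ℕ), k₁ + k₂ ≤ n →
      ∀ (f : (Fin k₁ → Fin n) → ℝ) (g : (Fin k₂ → Fin n) → ℝ),
        (∀ x, 0 ≤ f x) → (∀ x, 0 ≤ g x) →
        ∀ (a₁ : Fin k₁ → Fin n) (a₂ : Fin k₂ → Fin n),
          Function.Injective a₁ → Function.Injective a₂ →
          (∀ i j, a₁ i ≠ a₂ j) →
          (∑ π : Equiv.Perm (Fin n), f (π ∘ a₁) * g (π ∘ a₂)) / (n.factorial : ℝ) ≤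
            (((n - (k₁ + k₂)).factorial : ℝ) * (n.factorial : ℝ) /
                (((n - k₁).factorial : ℝ) * ((n - k₂).factorial : ℝ))) *
              ((∑ π : Equiv.Perm (Fin n), f (π ∘ a₁)) / (n.factorial : ℝ)) *
              ((∑ π : Equiv.Perm (Fin n), g (π ∘ a₂)) / (n.factorial : ℝ))) ∧
    (∃ C : ℝ, 0 < C ∧ ∀ (n : ℕ), k₁ + k₂ ≤ n →
      ((n - (k₁ + k₂)).factorial : ℝ) * (n.factorial : ℝ) /
          (((n - k₁).factorial : ℝ) * ((n - k₂).factorial : ℝ)) ≤ C) := by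
  refine ⟨?_, ((k₂ : ℝ) + 1) ^ k₁, by positivity, ?_⟩
  · intro n hn f g hf hg a₁ a₂ h₁ h₂ hd
    have e₁ := sum_perm_comp ⟨a₁, h₁⟩ f
    have e₂ := sum_perm_comp ⟨a₂, h₂⟩ g
    have e := sum_perm_comp (n := n) ⟨Sum.elim a₁ a₂, h₁.sumElim h₂ hd⟩
      (fun x => f (x ∘ Sum.inl) * g (x ∘ Sum.inr))
    simp only [Function.Embedding.coeFn_mk, Function.comp_assoc, Sum.elim_comp_inl,
      Sum.elim_comp_inr, Fintype.card_sum, Fintype.card_fin] at e₁ e₂ e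
    rw [e₁, e₂, e]
    have key := sum_embedding_sum_le f g hf hg
    have p : (0 : ℝ) < n.factorial := by exact_mod_cast n.factorial_pos
    have p₁ : (0 : ℝ) < (n - k₁).factorial := by exact_mod_cast (n - k₁).factorial_pos
    have p₂ : (0 : ℝ) < (n - k₂).factorial := by exact_mod_cast (n - k₂).factorial_pos
    calc _ ≤ ((n - (k₁ + k₂)).factorial : ℝ) *
          ((∑ x : Fin k₁ ↪ Fin n, f x) * ∑ x : Fin k₂ ↪ Fin n, g x) / n.factorial := by
          gcongr
      _ = _ := by field_simp
  · intro n hn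
    obtain ⟨m, rfl⟩ := Nat.exists_eq_add_of_le hn
    have h := factorial_bound m k₂ k₁
    rw [show k₁ + k₂ + m - (k₁ + k₂) = m by omega, show k₁ + k₂ + m - k₁ = m + k₂ by omega,
      show k₁ + k₂ + m - k₂ = m + k₁ by omega, show k₁ + k₂ + m = m + k₂ + k₁ by omega]
    rw [div_le_iff₀ (by positivity)]
    exact_mod_cast h

end Paper
end
end
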